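/- arXiv:1612.00889 — 5 statements merged into one kernel-verified Lean document; each statement's English description precedes it below -/
import Mathlib

section
/- Let ε ∈ (0,1], μ > 0, and let a, b ≥ 0. If |a − b|_{μ/2} ≤ ε/9, i.e. |a − b| / (a + b + μ/2) ≤ ε/9, then: (1) if a ≥ μ then (1 − ε)·a ≤ b ≤ (1 + ε)·a, and (2) if a < μ then b ≤ (1 + ε)·μ. -/
/-- If `|a - b| ≤ ε / 9 * (a + b + μ / 2)` with `ε ≤ 1`, then `|a - b| ≤ ε * M` for every common
upper bound `M` of `a` and `μ`. -/
lemma abs_sub_le_mul_of_relative_dist_le {ε μ a b M : ℝ} (hε : 0 ≤ ε) (hε1 : ε ≤ 1)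
    (hμ : 0 < μ) (ha : 0 ≤ a) (hb : 0 ≤ b)
    (h : |a - b| / (a + b + μ / 2) ≤ ε / 9) (haM : a ≤ M) (hμM : μ ≤ M) :
    |a - b| ≤ ε * M := by
  have hpos : 0 < a + b + μ / 2 := by positivity
  rw [div_le_iff₀ hpos] at h
  have hcrude : ε * (a + b + μ / 2) ≤ a + b + μ / 2 := mul_le_of_le_one_left hpos.le hε1
  have hbM : b ≤ 2 * M := by linarith [neg_abs_le (a - b)]
  have hsum : ε * (a + b + μ / 2) ≤ ε * (9 * M) :=
    mul_le_mul_of_nonneg_left (by linarith) hε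
  linarith

/-- Corollary (iii) (relative ε-approximation): for `a, b ≥ 0`, `μ > 0` and `ε ∈ (0,1]`,
if `|a − b| / (a + b + μ/2) ≤ ε/9` then (1) `a ≥ μ` implies `(1−ε)a ≤ b ≤ (1+ε)a`,
and (2) `a < μ` implies `b ≤ (1+ε)μ`. -/
theorem relative_eps_approximation (ε μ a b : ℝ) (hε : 0 < ε) (hε1 : ε ≤ 1)
    (hμ : 0 < μ) (ha : 0 ≤ a) (hb : 0 ≤ b)
    (h : |a - b| / (a + b + μ/2) ≤ ε / 9) :
    (a ≥ μ → (1 - ε) * a ≤ b ∧ b ≤ (1 + ε) * a) ∧ (a < μ → b ≤ (1 + ε) * μ) := by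
  refine ⟨fun haμ => ?_, fun haμ => ?_⟩
  · have hab := abs_le.mp (abs_sub_le_mul_of_relative_dist_le hε.le hε1 hμ ha hb h le_rfl haμ)
    constructor <;> linarith [hab.1, hab.2]
  · have hab := abs_le.mp (abs_sub_le_mul_of_relative_dist_le hε.le hε1 hμ ha hb h haμ.le le_rfl)
    linarith [hab.1]
end

section
/- Let P be a finite set, Q a set, w : P → [0,∞) a weight function, and f : P × Q → ℝ a cost function with 0 ≤ f(p,q) ≤ 1 for all p ∈ P, q ∈ Q. Let s : P → (0,∞) satisfy s(p) ≥ w(p)·f(p,q) for every p ∈ P and q ∈ Q, and set t := Σ_{p∈P} s(p) (assume t > 0). Define w'(p) := s(p)/t and f'(p,q) := w(p)·f(p,q)/s(p). Let S ⊆ P, let u : S → [0,∞), and define u'(p) := u(p)·w(p)/w'(p) for p ∈ S. Let ε, ν > 0. Then for every q ∈ Q such that |Σ_{p∈P} w'(p)·f'(p,q) − Σ_{p∈S} u(p)·f'(p,q)|_{ν/t} ≤ ε, it holds that |Σ_{p∈P} w(p)·f(p,q) − Σ_{p∈S} u'(p)·f(p,q)|_ν ≤ ε. -/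
open Finset

/-- The ν-distance `|a − b|_ν := |a − b| / (a + b + ν)`. -/
noncomputable def nuDist (a b ν : ℝ) : ℝ := |a - b| / (a + b + ν)

/-- The ν-distance is invariant under scaling all three arguments by a positive factor. -/
theorem nuDist_mul_left {c : ℝ} (hc : 0 < c) (a b ν : ℝ) :
    nuDist (c * a) (c * b) (c * ν) = nuDist a b ν := by
  rw [nuDist, nuDist, ← mul_sub, ← mul_add, ← mul_add, abs_mul, abs_of_pos hc,
    mul_div_mul_left _ _ hc.ne']

/-- Theorem (improved (ε,ν)-approximation): given a query space `(P, w, Q, f)` with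
`0 ≤ f ≤ 1`, importances `s` with `s p ≥ w p · f p q`, total importance `t`,
rescaled weights `w' p = s p / t` and costs `f' p q = w p · f p q / s p`,
and a weighted subset `(S, u)` with `u' p = u p · w p / w' p`:
for every query `q` for which `(S,u)` is an `(ε, ν/t)`-approximation of the rescaled
query space, `(S, u')` satisfies `|f̄(P,w,q) − f̄(S,u',q)|_ν ≤ ε`. -/
theorem improved_approximation {α Q : Type*} (P : Finset α) (S : Finset α)
    (hSP : S ⊆ P)
    (w : α → ℝ) (f : α → Q → ℝ) (s : α → ℝ) (u : α → ℝ)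
    (t : ℝ) (w' : α → ℝ) (f' : α → Q → ℝ) (u' : α → ℝ) (ε ν : ℝ)
    (hw : ∀ p ∈ P, 0 ≤ w p)
    (hf0 : ∀ p ∈ P, ∀ q : Q, 0 ≤ f p q)
    (hf1 : ∀ p ∈ P, ∀ q : Q, f p q ≤ 1)
    (hs : ∀ p ∈ P, 0 < s p)
    (hsf : ∀ p ∈ P, ∀ q : Q, w p * f p q ≤ s p)
    (ht : t = ∑ p ∈ P, s p) (htpos : 0 < t)
    (hw' : ∀ p, w' p = s p / t)
    (hf' : ∀ p q, f' p q = w p * f p q / s p)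
    (hu : ∀ p ∈ S, 0 ≤ u p)
    (hu' : ∀ p, u' p = u p * w p / w' p)
    (hε : 0 < ε) (hν : 0 < ν) :
    ∀ q : Q,
      nuDist (∑ p ∈ P, w' p * f' p q) (∑ p ∈ S, u p * f' p q) (ν / t) ≤ ε →
      nuDist (∑ p ∈ P, w p * f p q) (∑ p ∈ S, u' p * f p q) ν ≤ ε := by
  intro q h
  have hP : ∑ p ∈ P, w p * f p q = t * ∑ p ∈ P, w' p * f' p q := by
    rw [mul_sum]
    refine sum_congr rfl fun p hp => ?_
    have := (hs p hp).ne'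
    rw [hw', hf']
    field_simp
  have hS : ∑ p ∈ S, u' p * f p q = t * ∑ p ∈ S, u p * f' p q := by
    rw [mul_sum]
    refine sum_congr rfl fun p hp => ?_
    have := (hs p (hSP hp)).ne'
    rw [hu', hw', hf']
    field_simp
  have hνt : ν = t * (ν / t) := by field_simp
  rw [hP, hS, hνt, nuDist_mul_left htpos]
  exact h
end

section
/- Let P be a finite set, Q a set, w : P → [0,∞) a weight function, and g : P × Q → [0,∞) a nonnegative cost function such that ḡ(P,w,q) := Σ_{p∈P} w(p)·g(p,q) > 0 for every q ∈ Q. Define f(p,q) := g(p,q) / ḡ(P,w,q). Let s : P → (0,∞) satisfy s(p) ≥ w(p)·f(p,q) for every p ∈ P and q ∈ Q, set t := Σ_{p∈P} s(p), w'(p) := s(p)/t, and f'(p,q) := w(p)·f(p,q)/s(p). Let ε ∈ (0,1], let S ⊆ P with u : S → [0,∞), and define u'(p) := u(p)·w(p)/w'(p) for p ∈ S. Then for every q ∈ Q such that |Σ_{p∈P} w'(p)·f'(p,q) − Σ_{p∈S} u(p)·f'(p,q)|_{1/(4t)} ≤ ε/4, it holds that |ḡ(P,w,q) − Σ_{p∈S}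 u'(p)·g(p,q)| ≤ ε·ḡ(P,w,q). -/
open Finset

/-- A relative `ν`-distance bound at `1 / t` with `ν = 1 / (4 * t)` yields an additive bound
for the quantity rescaled by `t`. -/
theorem abs_one_sub_mul_le_of_nuDist_le {t b ε : ℝ} (ht : 0 < t) (hb : 0 ≤ b) (hε : 0 < ε)
    (hε1 : ε ≤ 1) (h : nuDist (1 / t) b (1 / (4 * t)) ≤ ε / 4) : |1 - t * b| ≤ ε := by
  have hpos : 0 < 1 / t + b + 1 / (4 * t) := by positivity
  rw [nuDist, div_le_iff₀ hpos] at h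
  have hmul := mul_le_mul_of_nonneg_left h ht.le
  have hl : t * |1 / t - b| = |1 - t * b| := by
    rw [← abs_of_pos ht, ← abs_mul, abs_of_pos ht, mul_sub, mul_one_div_cancel ht.ne']
  have hr : t * (ε / 4 * (1 / t + b + 1 / (4 * t))) = ε / 4 * (5 / 4 + t * b) := by
    field_simp
    ring
  rw [hl, hr] at hmul
  have htb : 0 ≤ t * b := by positivity
  rw [abs_le] at hmul ⊢
  constructor <;> nlinarith

/-- Corollary (ε-coreset from (ε/4, 1/(4t))-approximation): given a query space
`(P, w, Q, g)` with nonnegative `g` and positive total cost `ḡ(P,w,q)` for each query,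
the normalized cost `f p q = g p q / ḡ(P,w,q)`, importances `s`, total importance `t`,
rescaled weights `w' p = s p / t`, rescaled costs `f' p q = w p · f p q / s p`, and
coreset weights `u' p = u p · w p / w' p`:
for every query `q` for which `(S,u)` is an `(ε/4, 1/(4t))`-approximation of the rescaled
query space, the weighted set `(S, u')` satisfies
`|ḡ(P,w,q) − ḡ(S,u',q)| ≤ ε · ḡ(P,w,q)`. -/
theorem eps_coreset_from_approximation {α Q : Type*} (P : Finset α) (S : Finset α)
    (hSP : S ⊆ P)
    (w : α → ℝ) (g : α → Q → ℝ) (f : α → Q → ℝ) (s : α → ℝ) (u : α → ℝ)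
    (t : ℝ) (w' : α → ℝ) (f' : α → Q → ℝ) (u' : α → ℝ) (ε : ℝ)
    (hw : ∀ p ∈ P, 0 ≤ w p)
    (hg : ∀ p ∈ P, ∀ q : Q, 0 ≤ g p q)
    (hgbar : ∀ q : Q, 0 < ∑ p ∈ P, w p * g p q)
    (hfdef : ∀ p q, f p q = g p q / (∑ p' ∈ P, w p' * g p' q))
    (hs : ∀ p ∈ P, 0 < s p)
    (hsf : ∀ p ∈ P, ∀ q : Q, w p * f p q ≤ s p)
    (ht : t = ∑ p ∈ P, s p)
    (hw' : ∀ p, w' p = s p / t)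
    (hf' : ∀ p q, f' p q = w p * f p q / s p)
    (hu : ∀ p ∈ S, 0 ≤ u p)
    (hu' : ∀ p, u' p = u p * w p / w' p)
    (hε : 0 < ε) (hε1 : ε ≤ 1) :
    ∀ q : Q,
      nuDist (∑ p ∈ P, w' p * f' p q) (∑ p ∈ S, u p * f' p q) (1 / (4 * t)) ≤ ε / 4 →
      |(∑ p ∈ P, w p * g p q) - ∑ p ∈ S, u' p * g p q| ≤ ε * ∑ p ∈ P, w p * g p q := by
  intro q h
  have hG := hgbar q
  have hPne : P.Nonempty := by
    rw [nonempty_iff_ne_empty]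
    rintro rfl
    simp at hG
  have htpos : 0 < t := ht ▸ sum_pos hs hPne
  have hA : ∑ p ∈ P, w' p * f' p q = 1 / t := by
    have hterm : ∀ p ∈ P,
        w' p * f' p q = (w p * g p q) * (1 / (t * ∑ p' ∈ P, w p' * g p' q)) := by
      intro p hp
      have := hs p hp
      rw [hw', hf', hfdef]
      field_simp
    rw [sum_congr rfl hterm, ← sum_mul]
    field_simp
  have hB : ∑ p ∈ S, u' p * g p q =
      (∑ p ∈ P, w p * g p q) * (t * ∑ p ∈ S, u p * f' p q) := by
    rw [mul_sum, mul_sum]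
    refine sum_congr rfl fun p hp => ?_
    have := hs p (hSP hp)
    rw [hu', hw', hf', hfdef]
    field_simp
  have hBnonneg : 0 ≤ ∑ p ∈ S, u p * f' p q := by
    refine sum_nonneg fun p hp => mul_nonneg (hu p hp) ?_
    rw [hf', hfdef]
    exact div_nonneg (mul_nonneg (hw p (hSP hp)) (div_nonneg (hg p (hSP hp) q) hG.le))
      (hs p (hSP hp)).le
  rw [hA] at h
  have key := abs_one_sub_mul_le_of_nuDist_le htpos hBnonneg hε hε1 h
  rw [hB, ← mul_one_sub, abs_mul, abs_of_pos hG, mul_comm]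
  exact mul_le_mul_of_nonneg_right key hG.le
end

section
/- Let ρ ≥ 1 and let (X, D) be a ρ-metric space. Let P ⊆ X be a finite set, k ≥ 1 an integer, and let p ↦ p' be a map from P into a finite set B ⊆ X such that Σ_{q∈P} D(q, q') ≤ ᾱ·OPT_k(P), where ᾱ ≥ 0, and assume Σ_{q∈P} D(q, q') > 0. For p ∈ P let P(p) := {q ∈ P : q' = p'} be the cluster of p. Then for every p ∈ P and every subset Z ⊆ X with 1 ≤ |Z| ≤ k such that Σ_{q∈P} D(q, Z) > 0, one has D(p, Z) / Σ_{q∈P} D(q, Z) ≤ ρ·ᾱ·D(p, p') / Σ_{q∈P} D(q, q') + ρ²·(ᾱ + 1) / |P(p)|. In particular, the sensitivity s(p) := max over such Z of D(p,Z)/Σ_{q∈P} D(q,Z) is bounded by the right-hand side. -/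
open Finset

/-- Distance from a point to a finite set of centers: `D(x,C) = min_{c ∈ C} D(x,c)`. -/
noncomputable def distToSet {X : Type*} (D : X → X → ℝ) (x : X) (C : Finset X) : ℝ :=
  sInf ((fun c => D x c) '' C)

/-- `OPT_k(P)`: the minimum over all center sets `Z ⊆ X` with `1 ≤ |Z| ≤ k` of the
clustering cost `∑_{p ∈ P} D(p, Z)`. -/
noncomputable def OPTk {X : Type*} (D : X → X → ℝ) (P : Finset X) (k : ℕ) : ℝ :=
  sInf { c : ℝ | ∃ Z : Finset X, Z.Nonempty ∧ Z.card ≤ k ∧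
    c = ∑ p ∈ P, distToSet D p Z }

/-- The infimum defining `distToSet` is attained on a nonempty set of centers. -/
lemma exists_distToSet_eq {X : Type*} (D : X → X → ℝ) (x : X) {Z : Finset X}
    (hZ : Z.Nonempty) : ∃ z ∈ Z, distToSet D x Z = D x z := by
  have hne : ((fun c => D x c) '' (Z : Set X)).Nonempty := hZ.to_set.image _
  obtain ⟨z, hz, h⟩ := hne.csInf_mem (Z.finite_toSet.image _)
  exact ⟨z, hz, h.symm⟩

lemma distToSet_le {X : Type*} (D : X → X → ℝ) (x : X) {Z : Finset X} {z : X}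
    (hz : z ∈ Z) : distToSet D x Z ≤ D x z :=
  csInf_le (Z.finite_toSet.image _).bddBelow ⟨z, hz, rfl⟩

lemma distToSet_nonneg {X : Type*} {D : X → X → ℝ} (hnonneg : ∀ x y, 0 ≤ D x y)
    (x : X) (Z : Finset X) : 0 ≤ distToSet D x Z := by
  refine Real.sInf_nonneg ?_
  rintro _ ⟨c, -, rfl⟩
  exact hnonneg x c

/-- The relaxed triangle inequality for the distance to a set of centers. -/
lemma distToSet_le_mul_add {X : Type*} {D : X → X → ℝ} {ρ : ℝ}
    (htri : ∀ x y z, D x z ≤ ρ * (D x y + D y z)) (x y : X) {Z : Finset X}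
    (hZ : Z.Nonempty) : distToSet D x Z ≤ ρ * (D x y + distToSet D y Z) := by
  obtain ⟨z, hz, h⟩ := exists_distToSet_eq D y hZ
  rw [h]
  exact (distToSet_le D x hz).trans (htri x y z)

lemma OPTk_le {X : Type*} {D : X → X → ℝ} (hnonneg : ∀ x y, 0 ≤ D x y) (P : Finset X)
    {k : ℕ} {Z : Finset X} (hZ : Z.Nonempty) (hZk : Z.card ≤ k) :
    OPTk D P k ≤ ∑ q ∈ P, distToSet D q Z := by
  refine csInf_le ⟨0, ?_⟩ ⟨Z, hZ, hZk, rfl⟩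
  rintro _ ⟨W, -, -, rfl⟩
  exact sum_nonneg fun q _ => distToSet_nonneg hnonneg q W

/-- Averaging the relaxed triangle inequality over a cluster bounds the distance from its
center to any set of centers. -/
lemma card_mul_distToSet_le {X : Type*} [DecidableEq X] {D : X → X → ℝ} {ρ : ℝ}
    (hρ : 0 ≤ ρ) (hsymm : ∀ x y, D x y = D y x) (hnonneg : ∀ x y, 0 ≤ D x y)
    (htri : ∀ x y z, D x z ≤ ρ * (D x y + D y z)) (P : Finset X) (π : X → X) (b : X)
    {Z : Finset X} (hZ : Z.Nonempty) :
    ((P.filter fun q => π q = b).card : ℝ) * distToSet D b Z ≤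
      ρ * (∑ q ∈ P, D q (π q) + ∑ q ∈ P, distToSet D q Z) := by
  rw [← nsmul_eq_mul, ← sum_const, ← sum_add_distrib, mul_sum]
  calc ∑ _q ∈ P.filter (fun q => π q = b), distToSet D b Z
      ≤ ∑ q ∈ P.filter (fun q => π q = b), ρ * (D q (π q) + distToSet D q Z) := by
        refine sum_le_sum fun q hq => ?_
        rw [(mem_filter.1 hq).2, hsymm q b]
        exact distToSet_le_mul_add htri b q hZ
    _ ≤ ∑ q ∈ P, ρ * (D q (π q) + distToSet D q Z) :=
        sum_le_sum_of_subset_of_nonneg (filter_subset _ _) fun q _ _ =>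
          mul_nonneg hρ (add_nonneg (hnonneg _ _) (distToSet_nonneg hnonneg q Z))

/-- Sensitivity bound (Lemma `sensbound`, unweighted): if `p ↦ p'` is a map from `P` into
a finite set `B` with connection cost at most `ᾱ·OPT_k(P)`, then for every `p ∈ P` and every
query `Z` with `1 ≤ |Z| ≤ k`,
`D(p,Z) / ∑_q D(q,Z) ≤ ρ·ᾱ·D(p,p') / ∑_q D(q,q') + ρ²·(ᾱ+1) / |P(p)|`,
where `P(p) = {q ∈ P : q' = p'}` is the cluster of `p`.  In particular the sensitivity
`s(p)` is bounded by the right-hand side. -/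
theorem sensitivity_bound {X : Type*} [DecidableEq X] (D : X → X → ℝ) (ρ : ℝ) (hρ1 : 1 ≤ ρ)
    (hsymm : ∀ x y, D x y = D y x) (hnonneg : ∀ x y, 0 ≤ D x y)
    (htri : ∀ x y z, D x z ≤ ρ * (D x y + D y z))
    (P : Finset X) (k : ℕ) (hk : 1 ≤ k)
    (B : Finset X) (π : X → X) (abar : ℝ) (habar : 0 ≤ abar)
    (hπB : ∀ p ∈ P, π p ∈ B)
    (hπcost : ∑ q ∈ P, D q (π q) ≤ abar * OPTk D P k)
    (hπpos : 0 < ∑ q ∈ P, D q (π q)) :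
    ∀ p ∈ P, ∀ Z : Finset X, Z.Nonempty → Z.card ≤ k →
      0 < (∑ q ∈ P, distToSet D q Z) →
      distToSet D p Z / (∑ q ∈ P, distToSet D q Z) ≤
        ρ * abar * D p (π p) / (∑ q ∈ P, D q (π q)) +
          ρ ^ 2 * (abar + 1) / ((P.filter fun q => π q = π p).card : ℝ) := by
  intro p hp Z hZ hZk hS
  have hρ : 0 ≤ ρ := zero_le_one.trans hρ1
  have hCS := hπcost.trans (mul_le_mul_of_nonneg_left (OPTk_le hnonneg P hZ hZk) habar)
  have hcluster := card_mul_distToSet_le hρ hsymm hnonneg htri P π (π p) hZ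
  have hm : (0 : ℝ) < ((P.filter fun q => π q = π p).card : ℝ) :=
    Nat.cast_pos.2 (card_pos.2 ⟨p, mem_filter.2 ⟨hp, rfl⟩⟩)
  have hpZ := distToSet_le_mul_add htri p (π p) hZ
  have hd := hnonneg p (π p)
  generalize ∑ q ∈ P, distToSet D q Z = S at *
  generalize ∑ q ∈ P, D q (π q) = C at *
  generalize ((P.filter fun q => π q = π p).card : ℝ) = m at *
  have hconn : ρ * D p (π p) ≤ ρ * abar * D p (π p) / C * S := by
    rw [div_mul_eq_mul_div, le_div_iff₀ hπpos]
    nlinarith [mul_le_mul_of_nonneg_left hCS (mul_nonneg hρ hd)]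
  have hcenter : ρ * distToSet D (π p) Z ≤ ρ ^ 2 * (abar + 1) / m * S := by
    rw [div_mul_eq_mul_div, le_div_iff₀ hm]
    nlinarith [mul_le_mul_of_nonneg_left hcluster hρ,
      mul_le_mul_of_nonneg_left hCS (mul_nonneg hρ hρ)]
  rw [div_le_iff₀ hS, add_mul]
  linarith
end

section
/- Let r > 0 and let D̃ : [0,∞) → [0,∞) be a monotone non-decreasing function satisfying the Log-Log Lipschitz condition: D̃(Δ·x) ≤ Δ^r·D̃(x) for every x > 0 and every Δ > 1. Let (X, dist) be a metric space and define D(x,y) := D̃(dist(x,y)) for all x, y ∈ X. Then (X, D) is a ρ-metric space for ρ = max{2^{r−1}, 1}; that is, D(x,z) ≤ ρ·(D(x,y) + D(y,z)) for all x, y, z ∈ X. -/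
open Real

/-- Power-mean bound for sums of two powers, covering concave and convex exponents together. -/
theorem add_rpow_le_max_mul_rpow_add_rpow {a b r : ℝ} (ha : 0 ≤ a) (hb : 0 ≤ b) (hr : 0 ≤ r) :
    (a + b) ^ r ≤ max ((2 : ℝ) ^ (r - 1)) 1 * (a ^ r + b ^ r) := by
  have hsum : 0 ≤ a ^ r + b ^ r := by positivity
  lift a to NNReal using ha
  lift b to NNReal using hb
  rcases le_total r 1 with h | h
  · have key : ((a : ℝ) + b) ^ r ≤ (a : ℝ) ^ r + (b : ℝ) ^ r := by
      exact_mod_cast NNReal.rpow_add_le_add_rpow a b hr h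
    exact key.trans (le_mul_of_one_le_left hsum (le_max_right _ _))
  · have key : ((a : ℝ) + b) ^ r ≤ (2 : ℝ) ^ (r - 1) * ((a : ℝ) ^ r + (b : ℝ) ^ r) := by
      exact_mod_cast NNReal.rpow_add_le_mul_rpow_add_rpow a b h
    exact key.trans (mul_le_mul_of_nonneg_right (le_max_left _ _) hsum)

/-- The log-log Lipschitz condition, rewritten without the ratio `Δ = (a + b) / a`. -/
theorem rpow_mul_apply_add_le {f : ℝ → ℝ} {a b r : ℝ} (ha : 0 < a) (hb : 0 < b)
    (hf : ∀ x : ℝ, 0 < x → ∀ Δ : ℝ, 1 < Δ → f (Δ * x) ≤ Δ ^ r * f x) :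
    a ^ r * f (a + b) ≤ (a + b) ^ r * f a := by
  have h := hf a ha ((a + b) / a) ((one_lt_div ha).2 (by linarith))
  rw [div_mul_cancel₀ _ ha.ne', Real.div_rpow (by positivity) ha.le, div_mul_eq_mul_div,
    le_div_iff₀ (Real.rpow_pos_of_pos ha r)] at h
  linarith

/-- Lemma (Log-Log Lipschitz implies ρ-metric): if `D̃ : [0,∞) → [0,∞)` is monotone
non-decreasing and satisfies `D̃(Δx) ≤ Δ^r·D̃(x)` for all `x > 0`, `Δ > 1`, then for a metric
space `(X, dist)`, the function `D(x,y) = D̃(dist x y)` satisfies the relaxed triangle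
inequality `D(x,z) ≤ ρ·(D(x,y) + D(y,z))` with `ρ = max (2^(r−1)) 1`. -/
theorem logLogLipschitz_rho_metric {X : Type*} [MetricSpace X]
    (r : ℝ) (hr : 0 < r) (Dt : ℝ → ℝ)
    (hnonneg : ∀ x : ℝ, 0 ≤ x → 0 ≤ Dt x)
    (hmono : ∀ x y : ℝ, 0 ≤ x → x ≤ y → Dt x ≤ Dt y)
    (hLLL : ∀ x : ℝ, 0 < x → ∀ Δ : ℝ, 1 < Δ → Dt (Δ * x) ≤ Δ ^ r * Dt x) :
    ∀ x y z : X,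
      Dt (dist x z) ≤ max ((2 : ℝ) ^ (r - 1)) 1 * (Dt (dist x y) + Dt (dist y z)) := by
  intro x y z
  have hDxy := hnonneg _ (dist_nonneg (x := x) (y := y))
  have hDyz := hnonneg _ (dist_nonneg (x := y) (y := z))
  have hρ : (1 : ℝ) ≤ max ((2 : ℝ) ^ (r - 1)) 1 := le_max_right _ _
  rcases eq_or_ne x y with rfl | hxy
  · exact (le_add_of_nonneg_left hDxy).trans
      (le_mul_of_one_le_left (add_nonneg hDxy hDyz) hρ)
  rcases eq_or_ne y z with rfl | hyz
  · exact (le_add_of_nonneg_right hDyz).trans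
      (le_mul_of_one_le_left (add_nonneg hDxy hDyz) hρ)
  refine (hmono _ _ dist_nonneg (dist_triangle x y z)).trans ?_
  have ha : 0 < dist x y := dist_pos.2 hxy
  have hb : 0 < dist y z := dist_pos.2 hyz
  generalize dist x y = a at *
  generalize dist y z = b at *
  have hleft := rpow_mul_apply_add_le ha hb hLLL
  have hright := rpow_mul_apply_add_le hb ha hLLL
  rw [add_comm b a] at hright
  have hpow := mul_le_mul_of_nonneg_right
    (add_rpow_le_max_mul_rpow_add_rpow ha.le hb.le hr.le) (add_nonneg hDxy hDyz)
  have hpos : 0 < a ^ r + b ^ r := by positivity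
  refine le_of_mul_le_mul_left ?_ hpos
  linarith
end
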